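/- For a Lipschitz spinor κ = (ξ,η), the kernel of the map D ↦ {κ, D} = ξ^* y − η^* x from Cl(0,n)^2 to Cl(0,n) is exactly the set of right multiples κ a = (ξa, ηa) for a ∈ Cl(0,n). -/

import Mathlib

open CliffordAlgebra

noncomputable section

namespace PaperCliff

noncomputable instance : Invertible (2 : ℝ) := invertibleOfNonzero two_ne_zero

/-- The quadratic form on `ℝ^{p,q}`: `p` generators of square `+1`, `q` of square `-1`. -/
def sigQ (p q : ℕ) : QuadraticForm ℝ (Fin (p + q) → ℝ) :=
  QuadraticMap.weightedSumSquares ℝ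
    (fun i : Fin (p + q) => if (i : ℕ) < p then (1 : ℝ) else -1)

/-- The negative-definite quadratic form for `Cl(0,n)`. -/
def negQ (n : ℕ) : QuadraticForm ℝ (Fin n → ℝ) :=
  QuadraticMap.weightedSumSquares ℝ (fun _ : Fin n => (-1 : ℝ))

variable {M : Type*} [AddCommGroup M] [Module ℝ M]

/-- Clifford conjugation: composite of the grade involution and reversal. -/
def cconj {Q : QuadraticForm ℝ M} (x : CliffordAlgebra Q) : CliffordAlgebra Q :=
  reverse (involute x)

/-- The paravectors `ℝ ⊕ ℝ^{p,q}` inside the Clifford algebra. -/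
def paravec (Q : QuadraticForm ℝ M) : Submodule ℝ (CliffordAlgebra Q) :=
  LinearMap.range (Algebra.linearMap ℝ (CliffordAlgebra Q)) ⊔ LinearMap.range (ι Q)

/-- The real (degree-zero) component of an element of the Clifford algebra,
via the canonical linear isomorphism with the exterior algebra. -/
def clRe {Q : QuadraticForm ℝ M} (x : CliffordAlgebra Q) : ℝ :=
  ExteriorAlgebra.algebraMapInv (CliffordAlgebra.equivExterior Q x)

/-- The reduced basis monomial `i_{j₁} ⋯ i_{j_k}` for a finite set of indices (in
increasing order). -/
def mono {m : ℕ} (Q : QuadraticForm ℝ (Fin m → ℝ)) (s : Finset (Fin m)) :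
    CliffordAlgebra Q :=
  ((s.sort (· ≤ ·)).map fun j => ι Q (Pi.single j 1)).prod

/-- The (paravector) Lipschitz group, as a subgroup of the units: the group generated by
invertible paravectors. -/
def lipUnits (Q : QuadraticForm ℝ M) : Subgroup (CliffordAlgebra Q)ˣ :=
  Subgroup.closure {u : (CliffordAlgebra Q)ˣ | (u : CliffordAlgebra Q) ∈ paravec Q}

/-- The underlying set of the paravector Lipschitz group `$Γ`. -/
def lipGrp (Q : QuadraticForm ℝ M) : Set (CliffordAlgebra Q) :=
  {x | ∃ u ∈ lipUnits Q, (u : CliffordAlgebra Q) = x}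

/-- The Lipschitz monoid `$Γ^▷ = $Γ ∪ {0}`. -/
def lipMon (Q : QuadraticForm ℝ M) : Set (CliffordAlgebra Q) :=
  insert 0 (lipGrp Q)

/-- A Lipschitz spinor: a pair of elements of the Lipschitz monoid, not both zero,
with `ξ ⬝ conj η` a paravector. -/
def IsSpinor (Q : QuadraticForm ℝ M) (ξ η : CliffordAlgebra Q) : Prop :=
  ξ ∈ lipMon Q ∧ η ∈ lipMon Q ∧ ¬(ξ = 0 ∧ η = 0) ∧ ξ * cconj η ∈ paravec Q

/-- Membership in `SL(2, $Γ)`: entries in the Lipschitz monoid, pseudo-determinant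
`a^* d - c^* b = 1`, and `a b^*, c d^*, c^* a, d^* b` paravectors. -/
def IsSL2 (Q : QuadraticForm ℝ M) (a b c d : CliffordAlgebra Q) : Prop :=
  a ∈ lipMon Q ∧ b ∈ lipMon Q ∧ c ∈ lipMon Q ∧ d ∈ lipMon Q ∧
    reverse a * d - reverse c * b = 1 ∧
    a * reverse b ∈ paravec Q ∧ c * reverse d ∈ paravec Q ∧
    reverse c * a ∈ paravec Q ∧ reverse d * b ∈ paravec Q

theorem cconj_mul' {Q : QuadraticForm ℝ M} (a b : CliffordAlgebra Q) :
    cconj (a * b) = cconj b * cconj a := by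
  simp [cconj, reverse.map_mul]

theorem cconj_one' {Q : QuadraticForm ℝ M} : cconj (1 : CliffordAlgebra Q) = 1 := by
  simp [cconj]

theorem paravec_exists {Q : QuadraticForm ℝ M} {p : CliffordAlgebra Q} (hp : p ∈ paravec Q) :
    ∃ (r : ℝ) (v : M), p = algebraMap ℝ _ r + ι Q v := by
  obtain ⟨a, ⟨r, rfl⟩, b, ⟨v, rfl⟩, rfl⟩ := Submodule.mem_sup.mp hp
  exact ⟨r, v, rfl⟩

theorem reverse_paravec {Q : QuadraticForm ℝ M} {p : CliffordAlgebra Q} (hp : p ∈ paravec Q) :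
    reverse p = p := by
  obtain ⟨r, v, rfl⟩ := paravec_exists hp
  simp

theorem lip_norm {Q : QuadraticForm ℝ M} (u : (CliffordAlgebra Q)ˣ) (hu : u ∈ lipUnits Q) :
    ∃ r : ℝ, r ≠ 0 ∧ (u : CliffordAlgebra Q) * cconj (u : CliffordAlgebra Q)
      = algebraMap ℝ _ r := by
  have key : ∀ (u : (CliffordAlgebra Q)ˣ) (r : ℝ),
      (u : CliffordAlgebra Q) * cconj (u : CliffordAlgebra Q) = algebraMap ℝ _ r → r ≠ 0 := by
    rintro u r h rfl
    have h1 : cconj (u : CliffordAlgebra Q) = 0 := by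
      rw [map_zero] at h
      exact (Units.mul_right_eq_zero u).mp h
    have h2 : (1 : CliffordAlgebra Q) = 0 := by
      rw [← cconj_one', ← Units.inv_mul u, cconj_mul', h1, zero_mul]
    exact one_ne_zero h2
  suffices H : ∃ r : ℝ, (u : CliffordAlgebra Q) * cconj (u : CliffordAlgebra Q)
      = algebraMap ℝ _ r by
    obtain ⟨r, hr⟩ := H
    exact ⟨r, key u r hr, hr⟩
  induction hu using Subgroup.closure_induction with
  | mem x hx =>
    obtain ⟨r, v, h⟩ := paravec_exists hx
    refine ⟨r * r - Q v, ?_⟩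
    rw [h]
    have hc : cconj (algebraMap ℝ (CliffordAlgebra Q) r + ι Q v)
        = algebraMap ℝ _ r - ι Q v := by
      simp [cconj, sub_eq_add_neg]
    rw [hc, add_mul, mul_sub, mul_sub, ι_sq_scalar, ← Algebra.commutes r (ι Q v)]
    simp
  | one => exact ⟨1, by simp [cconj_one']⟩
  | mul x y _ _ hx hy =>
    obtain ⟨r, hr⟩ := hx
    obtain ⟨s, hs⟩ := hy
    refine ⟨s * r, ?_⟩
    rw [Units.val_mul, cconj_mul', mul_assoc, ← mul_assoc (y : CliffordAlgebra Q), hs,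
      ← mul_assoc, ← Algebra.commutes, mul_assoc, hr, map_mul]
  | inv x _ hx =>
    obtain ⟨r, hr⟩ := hx
    have hr0 := key x r hr
    refine ⟨r⁻¹, ?_⟩
    have h1 : algebraMap ℝ (CliffordAlgebra Q) r *
        ((x⁻¹ : (CliffordAlgebra Q)ˣ) * cconj ((x⁻¹ : (CliffordAlgebra Q)ˣ) : CliffordAlgebra Q))
        = 1 := by
      rw [← mul_assoc, Algebra.commutes, ← hr, ← mul_assoc, Units.inv_mul, one_mul, ← cconj_mul',
        Units.inv_mul, cconj_one']
    calc _ = algebraMap ℝ (CliffordAlgebra Q) (r⁻¹ * r) *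
        ((x⁻¹ : (CliffordAlgebra Q)ˣ) *
          cconj ((x⁻¹ : (CliffordAlgebra Q)ˣ) : CliffordAlgebra Q)) := by
            rw [inv_mul_cancel₀ hr0, map_one, one_mul]
      _ = _ := by rw [map_mul, mul_assoc, h1, mul_one]

theorem spinor_symm {Q : QuadraticForm ℝ M} {ξ η : CliffordAlgebra Q} (h : IsSpinor Q ξ η) :
    reverse ξ * η = reverse η * ξ := by
  obtain ⟨-, hη, -, hp⟩ := h
  rcases hη with rfl | ⟨u, hu, rfl⟩
  · simp
  obtain ⟨r, hr0, hr⟩ := lip_norm u hu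
  have hc : cconj (u : CliffordAlgebra Q) * u = algebraMap ℝ _ r := by
    have : cconj (u : CliffordAlgebra Q) = (u⁻¹ : (CliffordAlgebra Q)ˣ) * algebraMap ℝ _ r := by
      rw [← hr, Units.inv_mul_cancel_left]
    rw [this, ← Algebra.commutes, mul_assoc, Units.inv_mul, mul_one]
  have hv : r⁻¹ • (ξ * cconj (u : CliffordAlgebra Q)) ∈ paravec Q := Submodule.smul_mem _ _ hp
  have hξ : ξ = r⁻¹ • (ξ * cconj (u : CliffordAlgebra Q)) * u := by
    rw [smul_mul_assoc, mul_assoc, hc, ← Algebra.commutes, ← Algebra.smul_def, smul_smul,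
      inv_mul_cancel₀ hr0, one_smul]
  generalize r⁻¹ • (ξ * cconj (u : CliffordAlgebra Q)) = v at hv hξ
  rw [hξ, reverse.map_mul, reverse_paravec hv, mul_assoc]

theorem reverse_cancel {Q : QuadraticForm ℝ M} (u : (CliffordAlgebra Q)ˣ)
    {a b : CliffordAlgebra Q}
    (h : reverse (u : CliffordAlgebra Q) * a = reverse (u : CliffordAlgebra Q) * b) : a = b := by
  have h1 : reverse ((u⁻¹ : (CliffordAlgebra Q)ˣ) : CliffordAlgebra Q) *
      reverse (u : CliffordAlgebra Q) = 1 := by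
    rw [← reverse.map_mul, Units.mul_inv, reverse.map_one]
  rw [← one_mul a, ← one_mul b, ← h1, mul_assoc, mul_assoc, h]

/-- For a Lipschitz spinor `κ = (ξ,η)`, the kernel of
`(x,y) ↦ {κ, (x,y)} = ξ^* y − η^* x` is exactly the set of right multiples
`κ a = (ξ a, η a)`, `a ∈ Cl(0,n)`. -/
theorem bracket_kernel (n : ℕ) (ξ η : CliffordAlgebra (negQ n))
    (h : IsSpinor (negQ n) ξ η) (x y : CliffordAlgebra (negQ n)) :
    reverse ξ * y - reverse η * x = 0 ↔
      ∃ a : CliffordAlgebra (negQ n), x = ξ * a ∧ y = η * a := by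
  have hs := spinor_symm h
  constructor
  · intro h0
    have h0 := sub_eq_zero.mp h0
    obtain ⟨hξ, hη, hne, -⟩ := h
    rcases hξ with rfl | ⟨u, hu, rfl⟩
    · rcases hη with rfl | ⟨u, hu, rfl⟩
      · exact absurd ⟨rfl, rfl⟩ hne
      · refine ⟨(u⁻¹ : (CliffordAlgebra (negQ n))ˣ) * y, ?_, ?_⟩
        · apply reverse_cancel u
          rw [← h0]
          simp
        · rw [Units.mul_inv_cancel_left]
    · refine ⟨(u⁻¹ : (CliffordAlgebra (negQ n))ˣ) * x, ?_, ?_⟩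
      · rw [Units.mul_inv_cancel_left]
      · apply reverse_cancel u
        rw [h0, ← mul_assoc, hs, mul_assoc, Units.mul_inv_cancel_left]
  · rintro ⟨a, rfl, rfl⟩
    rw [← mul_assoc, ← mul_assoc, hs, sub_self]

end PaperCliff
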